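/- arXiv:math/0101185 — 2 statements merged into one kernel-verified Lean document; each statement's English description precedes it below -/
import Mathlib

section
/- Suppose R ≠ 0, a ≠ 0 and ax ≠ 0. If v ∈ ℝ⁵ satisfies M·v = 0 and its fifth coordinate v₅ = 0, then v = 0. (In other words, wherever a·ax ≠ 0, every nonzero kernel vector of M has nonzero t-component.) -/
/-- The coordinate matrix of the 2-form ω = d(A·η + B·dt) at a point of the plug,
with rows/columns indexed by (θ₁, θ₂, θ₃, x, t); here a = A, aθ = ∂A/∂θ₃,
a_x = ∂A/∂x, a_t = ∂A/∂t, b_x = ∂B/∂x. -/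
noncomputable def plugMatrix (R θ₃ a aθ a_x a_t b_x : ℝ) : Matrix (Fin 5) (Fin 5) ℝ :=
  !![0, 0, -(R * Real.cos θ₃ * aθ - R * a * Real.sin θ₃), -(R * Real.cos θ₃ * a_x),
       -(R * Real.cos θ₃ * a_t);
     0, 0, -(R * Real.sin θ₃ * aθ + R * a * Real.cos θ₃), -(R * Real.sin θ₃ * a_x),
       -(R * Real.sin θ₃ * a_t);
     R * Real.cos θ₃ * aθ - R * a * Real.sin θ₃, R * Real.sin θ₃ * aθ + R * a * Real.cos θ₃,
       0, 0, 0;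
     R * Real.cos θ₃ * a_x, R * Real.sin θ₃ * a_x, 0, 0, b_x;
     R * Real.cos θ₃ * a_t, R * Real.sin θ₃ * a_t, 0, -b_x, 0]

/-! Deleting the row and column of `t` from `plugMatrix` leaves a skew-symmetric `4 × 4` minor with
Pfaffian `R² a a_x`. Where this is nonzero the minor is nonsingular; a kernel vector whose
`t`-component vanishes restricts to a kernel vector of the minor, so it is zero. -/

open Matrix
open scoped nonZeroDivisors

theorem eq_zero_of_det_submatrix_mem_nonZeroDivisors_of_mulVec_eq_zero
    {K m : Type*} [CommRing K] {n : ℕ} {A : Matrix m (Fin (n + 1)) K} {r : Fin n → m}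
    {j : Fin (n + 1)}
    (hdet : (A.submatrix r j.succAbove).det ∈ K⁰) {v : Fin (n + 1) → K} (hv : A *ᵥ v = 0)
    (hj : v j = 0) : v = 0 := by
  have hminor : A.submatrix r j.succAbove *ᵥ (v ∘ j.succAbove) = 0 := by
    ext i
    simpa [mulVec, dotProduct, Fin.sum_univ_succAbove _ j, hj] using congrFun hv (r i)
  have hrest : v ∘ j.succAbove = 0 :=
    eq_zero_of_det_mem_nonZeroDivisors_of_mulVec_eq_zero hdet hminor
  exact funext (j.forall_iff_succAbove.2 ⟨hj, congrFun hrest⟩)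

/-- The Pfaffian of a skew-symmetric `4 × 4` matrix with zero diagonal, a square root of its
determinant. It is read off the entries above the diagonal and has no meaning for other matrices. -/
def pfaffianFour {K : Type*} [CommRing K] (M : Matrix (Fin 4) (Fin 4) K) : K :=
  M 0 1 * M 2 3 - M 0 2 * M 1 3 + M 0 3 * M 1 2

theorem det_eq_pfaffianFour_sq {K : Type*} [CommRing K] {M : Matrix (Fin 4) (Fin 4) K}
    (hskew : Mᵀ = -M) (hdiag : M.diag = 0) : M.det = pfaffianFour M ^ 2 := by
  have hlower (i j : Fin 4) : M j i = -M i j := congrFun₂ hskew i j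
  have hzero (i : Fin 4) : M i i = 0 := congrFun hdiag i
  rw [pfaffianFour, det_succ_row_zero]
  simp only [Fin.sum_univ_four, det_fin_three, submatrix_apply, Fin.succAbove, Fin.castSucc_zero,
    Fin.castSucc_one, Fin.reduceCastSucc, Fin.reduceLT, ↓reduceIte, Fin.succ_zero_eq_one,
    Fin.succ_one_eq_two, Fin.reduceSucc, Fin.coe_ofNat_eq_mod, hzero,
    hlower 0 1, hlower 0 2, hlower 0 3, hlower 1 2, hlower 1 3, hlower 2 3]
  ring

section PlugMatrix

variable (R θ₃ a aθ a_x a_t b_x : ℝ)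

theorem plugMatrix_transpose :
    (plugMatrix R θ₃ a aθ a_x a_t b_x)ᵀ = -plugMatrix R θ₃ a aθ a_x a_t b_x := by
  ext i j
  fin_cases i <;> fin_cases j <;> simp [plugMatrix]

theorem plugMatrix_diag : (plugMatrix R θ₃ a aθ a_x a_t b_x).diag = 0 := by
  ext i
  fin_cases i <;> rfl

theorem pfaffianFour_plugMatrix_submatrix_castSucc :
    pfaffianFour ((plugMatrix R θ₃ a aθ a_x a_t b_x).submatrix Fin.castSucc Fin.castSucc) =
      R ^ 2 * a * a_x := by
  simp only [pfaffianFour, plugMatrix, submatrix_apply, Fin.castSucc_zero, Fin.castSucc_one,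
    Fin.reduceCastSucc, of_apply, cons_val]
  linear_combination R ^ 2 * a * a_x * Real.sin_sq_add_cos_sq θ₃

theorem det_plugMatrix_submatrix_castSucc :
    ((plugMatrix R θ₃ a aθ a_x a_t b_x).submatrix Fin.castSucc Fin.castSucc).det =
      (R ^ 2 * a * a_x) ^ 2 := by
  rw [det_eq_pfaffianFour_sq, pfaffianFour_plugMatrix_submatrix_castSucc]
  · rw [transpose_submatrix, plugMatrix_transpose, submatrix_neg, Pi.neg_apply, Pi.neg_apply]
  · exact funext fun i => congrFun (plugMatrix_diag R θ₃ a aθ a_x a_t b_x) i.castSucc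

end PlugMatrix

/-- Where R ≠ 0, a ≠ 0 and a_x ≠ 0, any kernel vector of the plug matrix whose fifth
(t-)component vanishes must be zero. -/
theorem stmt_5 (R θ₃ a aθ a_x a_t b_x : ℝ) (hR : R ≠ 0) (ha : a ≠ 0) (hax : a_x ≠ 0) :
    ∀ v : Fin 5 → ℝ, (plugMatrix R θ₃ a aθ a_x a_t b_x).mulVec v = 0 → v 4 = 0 → v = 0 := by
  intro v hv hvt
  have hdet : ((plugMatrix R θ₃ a aθ a_x a_t b_x).submatrix
      Fin.castSucc (Fin.last 4).succAbove).det ≠ 0 := by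
    rw [Fin.succAbove_last, det_plugMatrix_submatrix_castSucc]
    positivity
  exact eq_zero_of_det_submatrix_mem_nonZeroDivisors_of_mulVec_eq_zero
    (mem_nonZeroDivisors_of_ne_zero hdet) hv hvt
end

section
/- Let E be a real normed vector space and let V : ℝ × E → ℝ × E be a continuous, locally Lipschitz vector field, written V(t, x) = (V₁(t, x), V₂(t, x)) ∈ ℝ × E, satisfying V₁(−t, x) = V₁(t, x) and V₂(−t, x) = −V₂(t, x) for all (t, x). Let γ = (γ₁, γ₂) : ℝ → ℝ × E be differentiable with γ'(s) = V(γ(s)) for all s ∈ ℝ. Suppose γ₁(s₀) = 0 for some s₀ and γ(s₁) = (−1, p) for some s₁ ∈ ℝ and p ∈ E. Then γ(2s₀ − s₁) = (1, p). -/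
/-!
If a linear map `R` satisfies `V ∘ R = -R ∘ V`, then `R` followed by a reversal of time carries
solutions of `γ' = V γ` to solutions. When `R` fixes `γ s₀`, the curves `s ↦ γ s` and
`s ↦ R (γ (2 * s₀ - s))` are solutions that agree at `s₀`, hence coincide by uniqueness. For the
reflection `R (t, x) = (-t, x)` the fixed points are exactly the slice `t = 0`, and `R` exchanges
`(-1, p)` and `(1, p)`.
-/

open Set Filter Topology
open scoped NNReal

section Uniqueness

variable {F : Type*} [NormedAddCommGroup F] [NormedSpace ℝ F] {γ γ' : ℝ → F} {t₀ : ℝ}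

theorem isIntegralCurveAt_eventuallyEq_of_lipschitzOnWith {v : ℝ → F → F} {K : ℝ≥0} {U : Set F}
    (hU : U ∈ 𝓝 (γ t₀)) (hv : ∀ᶠ t in 𝓝 t₀, LipschitzOnWith K (v t) U)
    (hγ : IsIntegralCurveAt γ v t₀) (hγ' : IsIntegralCurveAt γ' v t₀) (h : γ t₀ = γ' t₀) :
    γ =ᶠ[𝓝 t₀] γ' := by
  have hγU : ∀ᶠ t in 𝓝 t₀, γ t ∈ U := hγ.continuousAt hU
  have hγ'U : ∀ᶠ t in 𝓝 t₀, γ' t ∈ U := hγ'.continuousAt (h ▸ hU)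
  exact ODE_solution_unique_of_eventually (s := fun _ ↦ U) hv (hγ.and hγU) (hγ'.and hγ'U) h

theorem isIntegralCurveOn_eqOn_of_locallyLipschitz {V : F → F} {I : Set ℝ}
    (hV : LocallyLipschitz V) (hIo : IsOpen I) (hI : IsPreconnected I)
    (hγ : IsIntegralCurveOn γ (fun _ ↦ V) I) (hγ' : IsIntegralCurveOn γ' (fun _ ↦ V) I)
    (ht₀ : t₀ ∈ I) (h : γ t₀ = γ' t₀) : EqOn γ γ' I := by
  have eventuallyEq_of_eq {t : ℝ} (ht : t ∈ I) (heq : γ t = γ' t) : γ =ᶠ[𝓝 t] γ' := by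
    obtain ⟨K, U, hU, hK⟩ := hV (γ t)
    have hIt : I ∈ 𝓝 t := hIo.mem_nhds ht
    exact isIntegralCurveAt_eventuallyEq_of_lipschitzOnWith hU (.of_forall fun _ ↦ hK)
      (hγ.isIntegralCurveAt hIt) (hγ'.isIntegralCurveAt hIt) heq
  have hclosed : closure {t | γ =ᶠ[𝓝 t] γ'} ∩ I ⊆ {t | γ =ᶠ[𝓝 t] γ'} := by
    rintro t ⟨htcl, ht⟩
    have hIt : I ∈ 𝓝 t := hIo.mem_nhds ht
    have hfreq : ∃ᶠ r in 𝓝 t, γ r = γ' r :=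
      (mem_closure_iff_frequently.mp htcl).mono fun _ hr ↦ hr.self_of_nhds
    exact eventuallyEq_of_eq ht <| tendsto_nhds_unique_of_frequently_eq
      (hγ.isIntegralCurveAt hIt).continuousAt (hγ'.isIntegralCurveAt hIt).continuousAt hfreq
  have hsub : I ⊆ {t | γ =ᶠ[𝓝 t] γ'} :=
    hI.subset_of_closure_inter_subset isOpen_setOfPred_eventually_nhds
      ⟨t₀, ht₀, eventuallyEq_of_eq ht₀ h⟩ hclosed
  exact fun t ht ↦ (hsub ht).self_of_nhds

end Uniqueness

section Reversibility

variable {F : Type*} [NormedAddCommGroup F] [NormedSpace ℝ F] {R : F →L[ℝ] F} {V : F → F}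
  {γ : ℝ → F} {I : Set ℝ}

/-- The vector field `V` is reversible with reversing symmetry `R`, that is, `V` is `R`-related to
`-V`. Unlike in part of the literature, `R` may be any linear map, not only an involution. -/
def IsReversedBy (R : F →L[ℝ] F) (V : F → F) : Prop :=
  ∀ z, V (R z) = -R (V z)

theorem IsReversedBy.isIntegralCurveOn_comp_const_sub (hR : IsReversedBy R V)
    (hγ : IsIntegralCurveOn γ (fun _ ↦ V) I) (c : ℝ) :
    IsIntegralCurveOn (fun s ↦ R (γ (c - s))) (fun _ ↦ V) ((c - ·) ⁻¹' I) := by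
  intro s hs
  have hsub : HasDerivWithinAt (c - ·) (-1) ((c - ·) ⁻¹' I) s :=
    (hasDerivWithinAt_id s _).const_sub c
  have hcomp : HasDerivWithinAt (fun r ↦ γ (c - r)) ((-1 : ℝ) • V (γ (c - s)))
      ((c - ·) ⁻¹' I) s :=
    (hγ (c - s) hs).scomp s hsub (mapsTo_preimage _ _)
  simpa only [hR (γ (c - s)), neg_one_smul, map_neg, Function.comp_def] using
    R.hasFDerivAt.comp_hasDerivWithinAt s hcomp

theorem stmt_13_general (hV : LocallyLipschitz V) (hR : IsReversedBy R V)
    (hIo : IsOpen I) (hI : I.OrdConnected) (hγ : IsIntegralCurveOn γ (fun _ ↦ V) I)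
    {s₀ s : ℝ} (h₀ : R (γ s₀) = γ s₀) (hs : s ∈ I) (hs' : 2 * s₀ - s ∈ I) :
    γ (2 * s₀ - s) = R (γ s) := by
  let J : Set ℝ := I ∩ (2 * s₀ - ·) ⁻¹' I
  have hJo : IsOpen J := hIo.inter (hIo.preimage (by fun_prop))
  have hJ : J.OrdConnected :=
    hI.inter (hI.preimage_anti fun _ _ h ↦ sub_le_sub_left h _)
  have hs₀I : s₀ ∈ I := hI.uIcc_subset hs hs' (by rw [mem_uIcc]; grind)
  have hfix : 2 * s₀ - s₀ = s₀ := by ring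
  have hs₀J : s₀ ∈ J := ⟨hs₀I, by rwa [mem_preimage, hfix]⟩
  have heq : EqOn γ (fun r ↦ R (γ (2 * s₀ - r))) J :=
    isIntegralCurveOn_eqOn_of_locallyLipschitz hV hJo hJ.isPreconnected
      (hγ.mono inter_subset_left)
      ((hR.isIntegralCurveOn_comp_const_sub hγ _).mono inter_subset_right) hs₀J
      (by rw [hfix, h₀])
  have hsJ : 2 * s₀ - s ∈ J := ⟨hs', by rwa [mem_preimage, sub_sub_cancel]⟩
  simpa only [sub_sub_cancel] using heq hsJ

end Reversibility

section ReflectFst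

variable {G E : Type*} [NormedAddCommGroup G] [NormedSpace ℝ G]
  [NormedAddCommGroup E] [NormedSpace ℝ E]

variable (G E) in
/-- The linear reflection `(t, x) ↦ (-t, x)` of a product space; the symmetry of the plug for
`G = ℝ`. -/
def reflectFst : G × E →L[ℝ] G × E :=
  (-ContinuousLinearMap.id ℝ G).prodMap (.id ℝ E)

@[simp]
theorem reflectFst_apply (z : G × E) : reflectFst G E z = (-z.1, z.2) := rfl

theorem isReversedBy_reflectFst {V : G × E → G × E}
    (hV₁ : ∀ t x, (V (-t, x)).1 = (V (t, x)).1) (hV₂ : ∀ t x, (V (-t, x)).2 = -(V (t, x)).2) :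
    IsReversedBy (reflectFst G E) V := by
  rintro ⟨t, x⟩
  ext <;> simp [hV₁, hV₂]

end ReflectFst

/-- Property (P.3) in concrete form: for a continuous, locally Lipschitz, time-reversal
symmetric vector field V on ℝ × E, a solution γ of γ' = V(γ) that reaches the slice
{t = 0} at time s₀ and passes through (−1, p) at time s₁ must pass through (1, p) at
time 2s₀ − s₁. -/
theorem stmt_13 {E : Type*} [NormedAddCommGroup E] [NormedSpace ℝ E]
    (V : ℝ × E → ℝ × E) (hVc : Continuous V) (hVl : LocallyLipschitz V)
    (hV₁ : ∀ (t : ℝ) (x : E), (V (-t, x)).1 = (V (t, x)).1)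
    (hV₂ : ∀ (t : ℝ) (x : E), (V (-t, x)).2 = -(V (t, x)).2)
    (γ : ℝ → ℝ × E) (hγ : ∀ s, HasDerivAt γ (V (γ s)) s)
    (s₀ : ℝ) (h₀ : (γ s₀).1 = 0)
    (s₁ : ℝ) (p : E) (h₁ : γ s₁ = (-1, p)) :
    γ (2 * s₀ - s₁) = (1, p) := by
  have hfix : reflectFst ℝ E (γ s₀) = γ s₀ := by ext <;> simp [h₀]
  simpa [h₁] using stmt_13_general hVl (isReversedBy_reflectFst hV₁ hV₂) isOpen_univ
    ordConnected_univ (IsIntegralCurve.isIntegralCurveOn hγ univ) hfix (mem_univ s₁) (mem_univ _)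
end
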